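/- Let X be a Hausdorff space with a countable k-network, I a discretely-complete ideal of compact subsets of X, and Y a topological space with a countable Pytkeev network. Then the function space C_I(X,Y) of continuous maps from X to Y with the I-open topology has a countable Pytkeev network. -/

import Mathlib

open Set Filter Topology TopologicalSpace

/-- A set `A` accumulates at `x` if every neighborhood of `x` contains
infinitely many points of `A`. -/
def AccumulatesAt {X : Type*} [TopologicalSpace X] (A : Set X) (x : X) : Prop :=
  ∀ U ∈ 𝓝 x, (U ∩ A).Infinite

/-- `𝒩` is a network: for each point and open neighborhood there is a member of `𝒩`
containing the point and contained in the neighborhood. -/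
def IsNetwork {X : Type*} [TopologicalSpace X] (𝒩 : Set (Set X)) : Prop :=
  ∀ (x : X) (U : Set X), IsOpen U → x ∈ U → ∃ N ∈ 𝒩, x ∈ N ∧ N ⊆ U

/-- `𝒩` is a Pytkeev network. -/
def IsPytkeevNetwork {X : Type*} [TopologicalSpace X] (𝒩 : Set (Set X)) : Prop :=
  IsNetwork 𝒩 ∧ ∀ (x : X) (U : Set X), IsOpen U → x ∈ U →
    ∀ A : Set X, AccumulatesAt A x → ∃ N ∈ 𝒩, N ⊆ U ∧ (N ∩ A).Infinite

/-- `𝒩` is a k-network. -/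
def IsKNetwork {X : Type*} [TopologicalSpace X] (𝒩 : Set (Set X)) : Prop :=
  ∀ (U K : Set X), IsOpen U → IsCompact K → K ⊆ U →
    ∃ F ⊆ 𝒩, F.Finite ∧ K ⊆ ⋃₀ F ∧ ⋃₀ F ⊆ U

/-- The `I`-open topology on the space of continuous maps, generated by the sets
`[K;U] = {f : f(K) ⊆ U}` for `K ∈ I` and `U` open. -/
def IOpenTopology {X Y : Type*} [TopologicalSpace X] [TopologicalSpace Y]
    (I : Set (Set X)) : TopologicalSpace C(X, Y) :=
  TopologicalSpace.generateFrom
    {S : Set C(X, Y) | ∃ K ∈ I, ∃ U : Set Y, IsOpen U ∧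
      S = {f : C(X, Y) | ∀ x ∈ K, f x ∈ U}}

/-!
Enumerate the finite unions of a countable k-network of `X` as `e`, and a countable Pytkeev network
of `Y` as `p`. A set `[K;U]` is approximated from inside by `[Kₙ;Uₙ]`, where `Kₙ` is the
intersection of those `e i ⊇ K` and `Uₙ` the union of those `p i ⊆ U` with `i < n`.

Suppose that functions `g a` converge to `f ∈ [K;U]` in the `I`-open topology but
`g a ∉ [Kₙ;Uₙ]` for `n = n a → ∞`, as witnessed by points `x a ∈ Kₙ` with `g a (x a) ∉ Uₙ`. The
points `x a` converge to `K`, so adjoining them to `K` gives a compact set, which lies in `I` by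
discrete completeness. Hence the values `g a (x a)` cluster at `f z` for some `z ∈ K`, and the
Pytkeev property of `p` puts infinitely many of them into a single `p i ⊆ U`, although
`p i ⊆ Uₙ` as soon as `n > i`. Thus `g a ∈ [Kₙ;Uₙ]` for almost all `a`.

Applied to the constant functions `g n = f`, this shows that the finite intersections of sets
`[Kₙ;Uₙ]` form a network. If `A` accumulates at `f` and met each approximant of a basic neighborhood
of `f` in a finite set, then ranking the members of `A` by the last approximant that misses them
would give a contradiction.
-/

lemma exists_tendsto_atTop_eventually_notMem {α : Type*} {N : ℕ → Set α}
    (hN : Monotone N) (hfin : ∀ m, (N m).Finite) (hcover : ∀ a, ∃ m, a ∈ N m) :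
    ∃ r : α → ℕ, Tendsto r cofinite atTop ∧ ∀ᶠ a in cofinite, a ∉ N (r a) := by
  classical
  refine ⟨fun a => Nat.find (hcover a) - 1, tendsto_atTop.2 fun m => ?_, ?_⟩
  · filter_upwards [(hfin m).compl_mem_cofinite] with a ha
    have : m < Nat.find (hcover a) :=
      lt_of_not_ge fun h => ha (hN h (Nat.find_spec (hcover a)))
    exact Nat.le_sub_one_of_lt this
  · filter_upwards [(hfin 0).compl_mem_cofinite] with a ha
    have : Nat.find (hcover a) ≠ 0 := fun h => ha (h ▸ Nat.find_spec (hcover a))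
    exact Nat.find_min (hcover a) (Nat.sub_one_lt this)

section NhdsSet

variable {ι X : Type*} [TopologicalSpace X] {K : Set X} {l : Filter ι} {x : ι → X}

lemma disjoint_nhdsSet_of_forall_not_clusterPt (hK : IsCompact K) {m : Filter X}
    (h : ∀ z ∈ K, ¬ClusterPt z m) : Disjoint (𝓝ˢ K) m :=
  hK.disjoint_nhdsSet_left.2 fun z hz => disjoint_iff.2 (not_neBot.1 (h z hz))

lemma exists_mapClusterPt_of_tendsto_nhdsSet [l.NeBot] (hK : IsCompact K)
    (hx : Tendsto x l (𝓝ˢ K)) : ∃ z ∈ K, MapClusterPt z l x := by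
  by_contra! h
  exact NeBot.ne inferInstance
    ((disjoint_nhdsSet_of_forall_not_clusterPt hK h).eq_bot_of_ge hx)

lemma isCompact_union_range_of_tendsto_nhdsSet (hK : IsCompact K)
    (hx : Tendsto x cofinite (𝓝ˢ K)) : IsCompact (K ∪ range x) := by
  intro m _ hm
  by_cases! h : ∃ z ∈ K, ClusterPt z m
  · obtain ⟨z, hz, hzm⟩ := h
    exact ⟨z, Or.inl hz, hzm⟩
  obtain ⟨V, hV, W, hW, hVW⟩ :=
    Filter.disjoint_iff.1 (disjoint_nhdsSet_of_forall_not_clusterPt hK h)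
  have hfin : (x '' {a | x a ∉ V}).Finite := (mem_cofinite.1 (hx hV)).image x
  have hfin_mem : x '' {a | x a ∉ V} ∈ m := by
    filter_upwards [hW, le_principal_iff.1 hm]
    rintro _ hwW (hwK | ⟨a, rfl⟩)
    · exact (hVW.le_bot ⟨subset_of_mem_nhdsSet hV hwK, hwW⟩).elim
    · exact ⟨a, fun haV => hVW.le_bot ⟨haV, hwW⟩, rfl⟩
  obtain ⟨_, ⟨a, -, rfl⟩, ha⟩ := hfin.isCompact (le_principal_iff.2 hfin_mem)
  exact ⟨x a, Or.inr ⟨a, rfl⟩, ha⟩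

lemma discreteTopology_range_diff_of_tendsto_nhdsSet [T2Space X] (hK : IsCompact K)
    (hx : Tendsto x cofinite (𝓝ˢ K)) : DiscreteTopology ↥(range x \ K) := by
  refine discreteTopology_subtype_iff.2 fun z hz => ?_
  have hdisj : Disjoint (𝓝ˢ K) (𝓝 z) := hK.disjoint_nhdsSet_left.2 fun w hw =>
    disjoint_nhds_nhds.2 (ne_of_mem_of_not_mem hw hz.2)
  obtain ⟨V, hV, O, hO, hVO⟩ := Filter.disjoint_iff.1 hdisj
  have hfin : (x '' {a | x a ∉ V}).Finite := (mem_cofinite.1 (hx hV)).image x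
  rw [← disjoint_iff, disjoint_principal_right]
  filter_upwards [mem_nhdsWithin_of_mem_nhds hO, nhdsNE_le_cofinite z hfin.compl_mem_cofinite]
  rintro _ hwO hw ⟨⟨a, rfl⟩, -⟩
  exact hw ⟨a, fun haV => hVO.le_bot ⟨haV, hwO⟩, rfl⟩

lemma exists_isCompact_mem_nhdsWithin_subset_inter [T2Space X] (hK : IsCompact K) {O : Set X}
    {z : X} (hO : O ∈ 𝓝 z) : ∃ C ∈ 𝓝[K] z, IsCompact C ∧ C ⊆ K ∩ O := by
  have hdisj : Disjoint (𝓝ˢ (K \ interior O)) (𝓝 z) :=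
    (hK.diff isOpen_interior).disjoint_nhdsSet_left.2 fun w hw => disjoint_nhds_nhds.2 <|
      (ne_of_mem_of_not_mem (mem_interior_iff_mem_nhds.2 hO) hw.2).symm
  obtain ⟨B, ⟨hB, hKB⟩, hBz⟩ := (hasBasis_nhdsSet _).disjoint_iff_left.1 hdisj
  refine ⟨K \ B, inter_mem_nhdsWithin K hBz, hK.diff hB, fun w hw => ⟨hw.1, ?_⟩⟩
  by_contra hwO
  exact hw.2 (hKB ⟨hw.1, fun h => hwO (interior_subset h)⟩)

end NhdsSet

section Pytkeev

variable {ι Y : Type*} [TopologicalSpace Y] {P Q : Set (Set Y)}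

lemma AccumulatesAt.frequently_mem {A : Set Y} {y : Y} (hA : AccumulatesAt A y) :
    ∃ᶠ a in 𝓝 y ⊓ cofinite, a ∈ A := by
  intro h
  obtain ⟨V, hV, T, hT, hVT⟩ := eventually_inf.1 h
  refine hA V hV ((mem_cofinite.1 hT).subset fun a ha haT => hVT a ⟨ha.1, haT⟩ ha.2)

lemma IsPytkeevNetwork.mono (hP : IsPytkeevNetwork P) (hPQ : P ⊆ Q) : IsPytkeevNetwork Q :=
  ⟨fun y U hU hy => (hP.1 y U hU hy).imp fun _ hN => ⟨hPQ hN.1, hN.2⟩,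
    fun y U hU hy A hA => (hP.2 y U hU hy A hA).imp fun _ hN => ⟨hPQ hN.1, hN.2⟩⟩

lemma IsPytkeevNetwork.exists_infinite_preimage (hP : IsPytkeevNetwork P) {l : Filter ι}
    (hl : l ≤ cofinite) {u : ι → Y} {y : Y} (hu : MapClusterPt y l u) {U : Set Y} (hU : IsOpen U)
    (hy : y ∈ U) : ∃ N ∈ P, N ⊆ U ∧ (u ⁻¹' N).Infinite := by
  by_contra! hfin
  have hfiber : ∀ w ∈ U, (u ⁻¹' {w}).Finite := fun w hw => by
    obtain ⟨N, hN, hwN, hNU⟩ := hP.1 w U hU hw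
    exact (hfin N hN hNU).subset (preimage_mono (singleton_subset_iff.2 hwN))
  have hacc : AccumulatesAt (range u) y := fun W hW hWfin => by
    have hpre : (u ⁻¹' (W ∩ U)).Infinite := frequently_cofinite_iff_infinite.1 <|
      (mapClusterPt_iff_frequently.1 hu _ (inter_mem hW (hU.mem_nhds hy))).filter_mono hl
    refine hpre (((hWfin.inter_of_left U).preimage' fun w hw => hfiber w hw.2).subset ?_)
    exact fun a ha => ⟨⟨ha.1, a, rfl⟩, ha.2⟩
  obtain ⟨N, hN, hNU, hNinf⟩ := hP.2 y U hU hy _ hacc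
  exact hNinf (image_preimage_eq_inter_range ▸ (hfin N hN hNU).image u)

end Pytkeev

/-- A discretely-complete family of compact sets that is stable under intersections with compact
sets. A discretely-complete ideal is such a family that covers `X` and is stable under finite
unions. -/
structure IsDiscretelyCompleteFamily {X : Type*} [TopologicalSpace X] (I : Set (Set X)) :
    Prop where
  isCompact : ∀ K ∈ I, IsCompact K
  inter_mem : ∀ A ∈ I, ∀ K : Set X, IsCompact K → A ∩ K ∈ I
  mem_of_diff : ∀ A B : Set X, IsCompact A → IsCompact B → (A \ B).Countable →
    DiscreteTopology ↥(A \ B) → B ∈ I → A ∈ I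

lemma IsDiscretelyCompleteFamily.union_range_mem {ι X : Type*} [Countable ι] [TopologicalSpace X]
    [T2Space X] {I : Set (Set X)} (hI : IsDiscretelyCompleteFamily I) {K : Set X} (hK : K ∈ I)
    {x : ι → X} (hx : Tendsto x cofinite (𝓝ˢ K)) : K ∪ range x ∈ I := by
  have hKc := hI.isCompact K hK
  refine hI.mem_of_diff _ K (isCompact_union_range_of_tendsto_nhdsSet hKc hx) hKc ?_ ?_ hK <;>
    rw [union_sdiff_left]
  · exact (countable_range x).mono sdiff_subset
  · exact discreteTopology_range_diff_of_tendsto_nhdsSet hKc hx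

section IOpen

variable {ι X Y : Type*} [TopologicalSpace X] [TopologicalSpace Y] {I : Set (Set X)}

/-- The intersection of the sets `[K;U]` over the pairs `(K, U) ∈ F`: a basic open set of the
`I`-open topology when `F` is finite, each `K` lies in `I` and each `U` is open. -/
def basicSet (F : Set (Set X × Set Y)) : Set C(X, Y) :=
  {f | ∀ j ∈ F, MapsTo f j.1 j.2}

lemma nhds_iOpenTopology (f : C(X, Y)) :
    @nhds _ (IOpenTopology I) f =
      ⨅ j : {j : Set X × Set Y // (j.1 ∈ I ∧ IsOpen j.2) ∧ MapsTo f j.1 j.2},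
        𝓟 {g : C(X, Y) | MapsTo g j.1.1 j.1.2} := by
  rw [IOpenTopology, nhds_generateFrom]
  refine le_antisymm (le_iInf fun j => ?_) (le_iInf₂ ?_)
  · exact iInf₂_le _ ⟨j.2.2, j.1.1, j.2.1.1, j.1.2, j.2.1.2, rfl⟩
  · rintro _ ⟨hf, K, hK, U, hU, rfl⟩
    exact iInf_le_of_le ⟨(K, U), ⟨hK, hU⟩, hf⟩ le_rfl

lemma tendsto_iOpenTopology_iff {l : Filter ι} {g : ι → C(X, Y)} {f : C(X, Y)} :
    Tendsto g l (@nhds _ (IOpenTopology I) f) ↔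
      ∀ K ∈ I, ∀ U, IsOpen U → MapsTo f K U → ∀ᶠ a in l, MapsTo (g a) K U := by
  simp only [nhds_iOpenTopology, tendsto_iInf, tendsto_principal, mem_ofPred_eq, Subtype.forall,
    Prod.forall, and_imp]
  exact ⟨fun h K hK U => h K U hK, fun h K U hK => h K hK U⟩

lemma hasBasis_nhds_iOpenTopology (f : C(X, Y)) :
    (@nhds _ (IOpenTopology I) f).HasBasis
      (fun F : Set (Set X × Set Y) =>
        F.Finite ∧ (∀ j ∈ F, j.1 ∈ I ∧ IsOpen j.2) ∧ f ∈ basicSet F) basicSet := by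
  rw [nhds_iOpenTopology]
  refine (hasBasis_iInf_principal_finite _).to_hasBasis (fun t ht => ?_) fun F ⟨hF, hFI, hfF⟩ => ?_
  · refine ⟨(↑) '' t, ⟨ht.image _, ?_, ?_⟩, fun g hg => mem_iInter₂.2 fun j hj => hg j ⟨j, hj, rfl⟩⟩
    · exact forall_mem_image.2 fun j _ => j.2.1
    · exact forall_mem_image.2 fun j _ => j.2.2
  · refine ⟨(↑) ⁻¹' F, hF.preimage Subtype.val_injective.injOn, fun g hg j hj => ?_⟩
    exact mem_iInter₂.1 hg ⟨j, hFI j hj, hfF j hj⟩ hj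

lemma IsDiscretelyCompleteFamily.mapClusterPt_eval [T2Space X] (hI : IsDiscretelyCompleteFamily I)
    {l : Filter ι} {g : ι → C(X, Y)} {f : C(X, Y)} (hg : Tendsto g l (@nhds _ (IOpenTopology I) f))
    {K : Set X} (hK : K ∈ I) {x : ι → X} (hxK : ∀ a, x a ∈ K) {z : X} (hx : MapClusterPt z l x) :
    MapClusterPt (f z) l fun a => g a (x a) := by
  refine (nhds_basis_opens (f z)).mapClusterPt_iff_frequently.2 fun W ⟨hzW, hW⟩ => ?_
  obtain ⟨C, hCz, hC, hCsub⟩ := exists_isCompact_mem_nhdsWithin_subset_inter (hI.isCompact K hK)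
    (f.continuous.continuousAt (hW.mem_nhds hzW))
  have hCI : C ∈ I := by
    simpa only [inter_eq_right.2 (hCsub.trans inter_subset_left)] using hI.inter_mem K hK C hC
  have hxC : ∃ᶠ a in l, x a ∈ C :=
    (hx.frequently (mem_nhdsWithin_iff_eventually.1 hCz)).mono fun a ha => ha (hxK a)
  have hgC : ∀ᶠ a in l, MapsTo (g a) C W :=
    tendsto_iOpenTopology_iff.1 hg C hCI W hW fun w hw => (hCsub hw).2
  exact (hxC.and_eventually hgC).mono fun a ha => ha.2 ha.1

end IOpen

section Approximation

variable {ι X Y : Type*} {e : ℕ → Set X} {p : ℕ → Set Y} {K : Set X} {U : Set Y}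

/-- The intersection of those among the first `n` sets of the sequence `e` that contain `K`. -/
def outerApprox (e : ℕ → Set X) (K : Set X) (n : ℕ) : Set X :=
  {x | ∀ i < n, K ⊆ e i → x ∈ e i}

/-- The union of those among the first `n` sets of the sequence `p` that are contained in `U`. -/
def innerApprox (p : ℕ → Set Y) (U : Set Y) (n : ℕ) : Set Y :=
  {y | ∃ i < n, p i ⊆ U ∧ y ∈ p i}

lemma antitone_outerApprox : Antitone (outerApprox e K) :=
  fun _ _ hmn _ hx i hi => hx i (hi.trans_le hmn)

lemma monotone_innerApprox : Monotone (innerApprox p U) :=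
  fun _ _ hmn _ ⟨i, hi, hy⟩ => ⟨i, hi.trans_le hmn, hy⟩

lemma subset_outerApprox (n : ℕ) : K ⊆ outerApprox e K n :=
  fun _ hx _ _ hi => hi hx

lemma innerApprox_subset (n : ℕ) : innerApprox p U n ⊆ U :=
  fun _ ⟨_, _, hi, hy⟩ => hi hy

variable [TopologicalSpace X]

/-- The supersets of `K` in the sequence `e` are cofinal among the neighborhoods of `K`. -/
def IsOuterNetworkAt (e : ℕ → Set X) (K : Set X) : Prop :=
  ∀ V, IsOpen V → K ⊆ V → ∃ i, K ⊆ e i ∧ e i ⊆ V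

lemma IsOuterNetworkAt.tendsto_nhdsSet (he : IsOuterNetworkAt e K) {l : Filter ι} {n : ι → ℕ}
    (hn : Tendsto n l atTop) {x : ι → X} (hx : ∀ a, x a ∈ outerApprox e K (n a)) :
    Tendsto x l (𝓝ˢ K) := by
  refine (hasBasis_nhdsSet K).tendsto_right_iff.2 fun V ⟨hV, hKV⟩ => ?_
  obtain ⟨i, hKi, hiV⟩ := he V hV hKV
  filter_upwards [hn.eventually_gt_atTop i] with a ha
  exact hiV (hx a i ha hKi)

lemma IsKNetwork.exists_seq_isOuterNetworkAt {𝒦 : Set (Set X)} (h𝒦 : IsKNetwork 𝒦)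
    (hc : 𝒦.Countable) : ∃ e : ℕ → Set X, ∀ K, IsCompact K → IsOuterNetworkAt e K := by
  obtain ⟨e, he⟩ := countable_iff_exists_subset_range.1
    ((countable_ofPred_finite_subset hc).image sUnion)
  refine ⟨e, fun K hK V hV hKV => ?_⟩
  obtain ⟨F, hF𝒦, hF, hKF, hFV⟩ := h𝒦 V K hV hK hKV
  obtain ⟨i, hi⟩ := he ⟨F, ⟨hF, hF𝒦⟩, rfl⟩
  exact ⟨i, hi ▸ hKF, hi ▸ hFV⟩

/-- The approximation from inside to `basicSet F` that replaces each `[K;U]` by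
`[outerApprox e K n; innerApprox p U n]`. -/
def approxSet [TopologicalSpace Y] (e : ℕ → Set X) (p : ℕ → Set Y) (F : Set (Set X × Set Y))
    (n : ℕ) : Set C(X, Y) :=
  basicSet (F.image fun j => (outerApprox e j.1 n, innerApprox p j.2 n))

/-- The sets `[M₁;Q₁] ∩ ⋯ ∩ [Mₘ;Qₘ]`, where each `Mⱼ` is a finite intersection of members of `e`
and each `Qⱼ` is a finite union of members of `p`. -/
def approxFamily [TopologicalSpace Y] (e : ℕ → Set X) (p : ℕ → Set Y) : Set (Set C(X, Y)) :=
  basicSet '' {F | F.Finite ∧ F ⊆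
    (range fun s : Finset ℕ => ⋂ i ∈ s, e i) ×ˢ (range fun s : Finset ℕ => ⋃ i ∈ s, p i)}

variable [TopologicalSpace Y] {F : Set (Set X × Set Y)}

lemma mem_approxSet {n : ℕ} {f : C(X, Y)} : f ∈ approxSet e p F n ↔
    ∀ j ∈ F, MapsTo f (outerApprox e j.1 n) (innerApprox p j.2 n) :=
  forall_mem_image

lemma monotone_approxSet : Monotone (approxSet e p F) := fun _ _ hmn _ hf =>
  mem_approxSet.2 fun j hj =>
    (mem_approxSet.1 hf j hj).mono (antitone_outerApprox hmn) (monotone_innerApprox hmn)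

lemma approxSet_subset_basicSet (n : ℕ) : approxSet e p F n ⊆ basicSet F := fun _ hf j hj =>
  (mem_approxSet.1 hf j hj).mono (subset_outerApprox n) (innerApprox_subset n)

lemma countable_approxFamily : (approxFamily e p).Countable :=
  (countable_ofPred_finite_subset ((countable_range _).prod (countable_range _))).image _

lemma approxSet_mem_approxFamily (hF : F.Finite) (n : ℕ) :
    approxSet e p F n ∈ approxFamily e p := by
  classical
  refine mem_image_of_mem _ ⟨hF.image _, ?_⟩
  rintro _ ⟨j, -, rfl⟩
  refine ⟨⟨{i ∈ Finset.range n | j.1 ⊆ e i}, ?_⟩, ⟨{i ∈ Finset.range n | p i ⊆ j.2}, ?_⟩⟩ <;> ext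
  · simp [outerApprox]
  · simp [innerApprox, and_assoc]

end Approximation

section FunctionSpace

variable {ι X Y : Type*} [TopologicalSpace X] [TopologicalSpace Y] [T2Space X]
  {I : Set (Set X)} {e : ℕ → Set X} {p : ℕ → Set Y} {K : Set X} {U : Set Y}
  {l : Filter ι} {g : ι → C(X, Y)} {f : C(X, Y)} {n : ι → ℕ}

lemma exists_mapsTo_approx [l.NeBot] (hI : IsDiscretelyCompleteFamily I)
    (hp : IsPytkeevNetwork (range p)) (hK : K ∈ I) (he : IsOuterNetworkAt e K) (hU : IsOpen U)
    (hf : MapsTo f K U) (hl : l ≤ cofinite) (hg : Tendsto g l (@nhds _ (IOpenTopology I) f))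
    (hn : Tendsto n cofinite atTop) :
    ∃ a, MapsTo (g a) (outerApprox e K (n a)) (innerApprox p U (n a)) := by
  by_contra! hbad
  simp only [MapsTo, not_forall] at hbad
  choose x hxK hxU using hbad
  have hx : Tendsto x cofinite (𝓝ˢ K) := he.tendsto_nhdsSet hn hxK
  have : Countable ι := by
    have hker : (atTop : Filter ℕ).ker = ∅ := le_cofinite_iff_ker.1 Nat.cofinite_eq_atTop.ge
    simpa [hker, countable_univ_iff] using hn.countable_compl_preimage_ker
  obtain ⟨z, hzK, hz⟩ :=
    exists_mapClusterPt_of_tendsto_nhdsSet (hI.isCompact K hK) (hx.mono_left hl)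
  have hcluster : MapClusterPt (f z) l fun a => g a (x a) :=
    hI.mapClusterPt_eval hg (hI.union_range_mem hK hx) (fun a => Or.inr ⟨a, rfl⟩) hz
  obtain ⟨_, ⟨i, rfl⟩, hiU, hinf⟩ := hp.exists_infinite_preimage hl hcluster hU (hf hzK)
  obtain ⟨a, hai, ha⟩ := ((frequently_cofinite_iff_infinite.2 hinf).and_eventually
    (hn.eventually_gt_atTop i)).exists
  exact hxU a ⟨i, ha, hiU, hai⟩

lemma eventually_mapsTo_approx (hI : IsDiscretelyCompleteFamily I)
    (hp : IsPytkeevNetwork (range p)) (hK : K ∈ I) (he : IsOuterNetworkAt e K) (hU : IsOpen U)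
    (hf : MapsTo f K U) (hl : l ≤ cofinite) (hg : Tendsto g l (@nhds _ (IOpenTopology I) f))
    (hn : Tendsto n cofinite atTop) :
    ∀ᶠ a in l, MapsTo (g a) (outerApprox e K (n a)) (innerApprox p U (n a)) := by
  by_contra hbad
  let val : {a // ¬MapsTo (g a) (outerApprox e K (n a)) (innerApprox p U (n a))} → ι := (↑)
  have : (comap val l).NeBot :=
    comap_neBot_iff_frequently.2 ((not_eventually.1 hbad).mono fun a ha => ⟨⟨a, ha⟩, rfl⟩)
  obtain ⟨a, ha⟩ := exists_mapsTo_approx (l := comap val l) (g := g ∘ val) (n := n ∘ val)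
    hI hp hK he hU hf ((comap_mono hl).trans (comap_cofinite_le val)) (hg.comp tendsto_comap)
    (hn.comp Subtype.val_injective.tendsto_cofinite)
  exact a.2 ha

lemma eventually_mem_approxSet (hI : IsDiscretelyCompleteFamily I)
    (hp : IsPytkeevNetwork (range p)) (he : ∀ K ∈ I, IsOuterNetworkAt e K)
    {F : Set (Set X × Set Y)} (hF : F.Finite) (hFI : ∀ j ∈ F, j.1 ∈ I ∧ IsOpen j.2)
    (hf : f ∈ basicSet F) (hl : l ≤ cofinite) (hg : Tendsto g l (@nhds _ (IOpenTopology I) f))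
    (hn : Tendsto n cofinite atTop) : ∀ᶠ a in l, g a ∈ approxSet e p F (n a) := by
  simp only [mem_approxSet]
  exact (eventually_all_finite hF).2 fun j hj => eventually_mapsTo_approx hI hp (hFI j hj).1
    (he _ (hFI j hj).1) (hFI j hj).2 (hf j hj) hl hg hn

lemma exists_mem_approxSet (hI : IsDiscretelyCompleteFamily I)
    (hp : IsPytkeevNetwork (range p)) (he : ∀ K ∈ I, IsOuterNetworkAt e K)
    {F : Set (Set X × Set Y)} (hF : F.Finite) (hFI : ∀ j ∈ F, j.1 ∈ I ∧ IsOpen j.2)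
    (hf : f ∈ basicSet F) : ∃ m, f ∈ approxSet e p F m :=
  (eventually_mem_approxSet (g := fun _ : ℕ => f) (n := id) hI hp he hF hFI hf le_rfl
    (tendsto_iOpenTopology_iff.2 fun _ _ _ _ h => .of_forall fun _ => h)
    Nat.cofinite_eq_atTop.le).exists

lemma exists_infinite_approxSet_inter (hI : IsDiscretelyCompleteFamily I)
    (hp : IsPytkeevNetwork (range p)) (he : ∀ K ∈ I, IsOuterNetworkAt e K)
    {F : Set (Set X × Set Y)} (hF : F.Finite) (hFI : ∀ j ∈ F, j.1 ∈ I ∧ IsOpen j.2)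
    (hf : f ∈ basicSet F) {A : Set C(X, Y)} (hA : @AccumulatesAt _ (IOpenTopology I) A f) :
    ∃ m, (approxSet e p F m ∩ A).Infinite := by
  by_contra! hfin
  let val : ↥(A ∩ basicSet F) → C(X, Y) := (↑)
  let l := comap val (@nhds _ (IOpenTopology I) f ⊓ cofinite)
  have : l.NeBot := by
    refine comap_neBot_iff_frequently.2 ?_
    rw [Subtype.range_coe]
    have hF_mem : basicSet F ∈ @nhds _ (IOpenTopology I) f :=
      (hasBasis_nhds_iOpenTopology f).mem_of_mem ⟨hF, hFI, hf⟩
    exact (@AccumulatesAt.frequently_mem _ (IOpenTopology I) _ _ hA).and_eventually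
      (mem_inf_of_left hF_mem)
  have hl : l ≤ cofinite := (comap_mono inf_le_right).trans (comap_cofinite_le val)
  obtain ⟨r, hr, hr_notMem⟩ := exists_tendsto_atTop_eventually_notMem
    (N := fun m => val ⁻¹' approxSet e p F m)
    (fun _ _ hmn => preimage_mono (monotone_approxSet hmn))
    (fun m => ((hfin m).preimage Subtype.val_injective.injOn).subset fun a ha => ⟨ha, a.2.1⟩)
    fun a => exists_mem_approxSet hI hp he hF hFI a.2.2
  have hr_mem : ∀ᶠ a in l, val a ∈ approxSet e p F (r a) :=
    eventually_mem_approxSet hI hp he hF hFI hf hl (tendsto_comap.mono_right inf_le_left) hr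
  obtain ⟨a, ha, ha'⟩ := (hr_mem.and (hl hr_notMem)).exists
  exact ha' ha

theorem isPytkeevNetwork_approxFamily (hI : IsDiscretelyCompleteFamily I)
    (hp : IsPytkeevNetwork (range p)) (he : ∀ K ∈ I, IsOuterNetworkAt e K) :
    @IsPytkeevNetwork C(X, Y) (IOpenTopology I) (approxFamily e p) := by
  have hbasic : ∀ (f : C(X, Y)) (O : Set C(X, Y)), IsOpen[IOpenTopology I] O → f ∈ O →
      ∃ F : Set (Set X × Set Y), (F.Finite ∧ (∀ j ∈ F, j.1 ∈ I ∧ IsOpen j.2) ∧ f ∈ basicSet F) ∧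
        basicSet F ⊆ O := fun f O hO hfO =>
    (hasBasis_nhds_iOpenTopology f).mem_iff.1 (@IsOpen.mem_nhds _ (IOpenTopology I) f O hO hfO)
  refine ⟨fun f O hO hfO => ?_, fun f O hO hfO A hA => ?_⟩ <;>
    obtain ⟨F, ⟨hF, hFI, hfF⟩, hFO⟩ := hbasic f O hO hfO
  · obtain ⟨m, hm⟩ := exists_mem_approxSet hI hp he hF hFI hfF
    exact ⟨_, approxSet_mem_approxFamily hF m, hm, (approxSet_subset_basicSet m).trans hFO⟩
  · obtain ⟨m, hm⟩ := exists_infinite_approxSet_inter hI hp he hF hFI hfF hA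
    exact ⟨_, approxSet_mem_approxFamily hF m, (approxSet_subset_basicSet m).trans hFO, hm⟩

theorem functionSpace_countable_pytkeevNetwork_general
    (h𝒦 : ∃ 𝒦 : Set (Set X), 𝒦.Countable ∧ IsKNetwork 𝒦)
    (hI : IsDiscretelyCompleteFamily I)
    (hPnet : ∃ Pnet : Set (Set Y), Pnet.Countable ∧ IsPytkeevNetwork Pnet) :
    ∃ 𝒩 : Set (Set C(X, Y)), 𝒩.Countable ∧
      @IsPytkeevNetwork C(X, Y) (IOpenTopology I) 𝒩 := by
  obtain ⟨𝒦, h𝒦c, h𝒦⟩ := h𝒦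
  obtain ⟨P, hPc, hP⟩ := hPnet
  obtain ⟨e, he⟩ := h𝒦.exists_seq_isOuterNetworkAt h𝒦c
  obtain ⟨p, hp⟩ := countable_iff_exists_subset_range.1 hPc
  exact ⟨approxFamily e p, countable_approxFamily,
    isPytkeevNetwork_approxFamily hI (hP.mono hp) fun K hK => he K (hI.isCompact K hK)⟩

end FunctionSpace

/-- For a Hausdorff space `X` with a countable k-network, a discretely-complete ideal `I`
of compact subsets of `X`, and a space `Y` with a countable Pytkeev network, the space
`C_I(X,Y)` with the `I`-open topology has a countable Pytkeev network. -/
theorem functionSpace_countable_pytkeevNetwork {X Y : Type*}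
    [TopologicalSpace X] [TopologicalSpace Y] [T2Space X]
    (h𝒦 : ∃ 𝒦 : Set (Set X), 𝒦.Countable ∧ IsKNetwork 𝒦)
    (I : Set (Set X))
    (hIcomp : ∀ K ∈ I, IsCompact K)
    (hIcover : ⋃₀ I = univ)
    (hIunion : ∀ A ∈ I, ∀ B ∈ I, A ∪ B ∈ I)
    (hIinter : ∀ A ∈ I, ∀ K : Set X, IsCompact K → A ∩ K ∈ I)
    (hIdc : ∀ A B : Set X, IsCompact A → IsCompact B → (A \ B).Countable →
      DiscreteTopology ↥(A \ B) → B ∈ I → A ∈ I)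
    (hPnet : ∃ Pnet : Set (Set Y), Pnet.Countable ∧ IsPytkeevNetwork Pnet) :
    ∃ 𝒩 : Set (Set C(X, Y)), 𝒩.Countable ∧
      @IsPytkeevNetwork C(X, Y) (IOpenTopology I) 𝒩 :=
  functionSpace_countable_pytkeevNetwork_general h𝒦 ⟨hIcomp, hIinter, hIdc⟩ hPnet
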